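/- Let p_1 < p_2 < ... < p_n be distinct Pythagorean primes and N = p_1 p_2 ⋯ p_n. Then the least real eigenvalue of the adjacency matrix of the Paley-type graph Γ_N equals (−√p_1 − 1)(p_2 − 1)(p_3 − 1)⋯(p_n − 1)/2ⁿ. -/

import Mathlib

/-!
The adjacency matrix has entries `f (a - b)`, with `f` the indicator of the unit squares of `ZMod N`,
so Fourier analysis on the group `ZMod N` diagonalizes it: its eigenvalues are the character sums
`∑ f(x) χ(x)` (`mem_spectrum_cayley`, `cayley_mem_spectrum`).

By the Chinese remainder theorem such a sum is a product over `i` of character sums over the nonzero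
squares modulo `p i` (`sum_QRset_eq_prod`). For the trivial character the factor is `(p i - 1) / 2`.
For a nontrivial one it is `(g - 1) / 2` with `g` a quadratic Gauss sum, and `g ^ 2 = p i` because
`-1` is a square, so the factor is `(±√(p i) - 1) / 2`; both signs occur (`exists_qrSum_eq_neg`).

The claimed value arises from a character that is nontrivial only modulo the smallest prime. It is
minimal (`prod_lower_bound`) because a negative product has some nontrivial factor `j`, whence its
absolute value is at most `(∏ (p i - 1) / 2) / (√(p j) - 1)`, which is largest for the smallest
prime.
-/

/-- `QRset M` is the set of quadratic residues among the units of `ZMod M`: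
units that are squares of units. -/
def QRset (M : ℕ) : Set (ZMod M) := {u | ∃ x : ZMod M, IsUnit x ∧ x ^ 2 = u}

/-- For a prime `q`, `QRp q` is the set of nonzero quadratic residues mod `q`. -/
def QRp (q : ℕ) : Set (ZMod q) := {z | z ≠ 0 ∧ IsSquare z}

/-- The Paley-type graph on `ZMod M`: `a` and `b` are adjacent iff `a - b ∈ QRset M`
(symmetrized; when `-1 ∈ QRset M` this relation is already symmetric). -/
def paleyType (M : ℕ) : SimpleGraph (ZMod M) :=
  SimpleGraph.fromRel (fun a b => a - b ∈ QRset M)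

open scoped Classical in
/-- The adjacency matrix of the Paley-type graph, as a real matrix. -/
noncomputable def paleyAdjMatrix (M : ℕ) : Matrix (ZMod M) (ZMod M) ℝ :=
  fun a b => if (paleyType M).Adj a b then 1 else 0

/-- Each real eigenvalue of a Cayley matrix `f (a - b)` is a character sum `∑ f(x) χ(x)`: by Fourier
inversion some Fourier coefficient of an eigenvector is nonzero, and the matrix acts on that
coefficient as multiplication by the sum. -/
theorem mem_spectrum_cayley {G : Type*} [AddCommGroup G] [Fintype G] [DecidableEq G] (f : G → ℝ)
    {μ : ℝ} (hμ : μ ∈ spectrum ℝ (Matrix.of fun a b => f (a - b))) :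
    ∃ χ : AddChar G ℂ, ∑ x, (f x : ℂ) * χ x = μ := by
  rw [← Matrix.spectrum_toLin', ← Module.End.hasEigenvalue_iff_mem_spectrum] at hμ
  obtain ⟨v, hv⟩ := hμ.exists_hasEigenvector
  have hAv : ∀ a, ∑ b, f (a - b) * v b = μ * v a := fun a => by
    simpa [Matrix.mulVec, dotProduct] using congrFun hv.apply_eq_smul a
  have key : ∀ χ : AddChar G ℂ, (∑ x, (f x : ℂ) * χ x) * ∑ b, (v b : ℂ) * χ b =
      μ * ∑ b, (v b : ℂ) * χ b := by
    intro χ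
    calc (∑ x, (f x : ℂ) * χ x) * ∑ b, (v b : ℂ) * χ b
        = ∑ b, ∑ x, ((f x : ℂ) * χ x) * ((v b : ℂ) * χ b) := by
          rw [Finset.sum_mul_sum, Finset.sum_comm]
      _ = ∑ b, ∑ a, (f (a - b) : ℂ) * v b * χ a := by
          refine Finset.sum_congr rfl fun b _ => ?_
          rw [← Equiv.sum_comp (Equiv.subRight b)]
          refine Finset.sum_congr rfl fun a _ => ?_
          have : χ a = χ (a - b) * χ b := by rw [← AddChar.map_add_eq_mul, sub_add_cancel]
          rw [this, Equiv.subRight_apply]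
          ring
      _ = ∑ a, (∑ b, (f (a - b) : ℂ) * v b) * χ a := by
          rw [Finset.sum_comm]
          simp_rw [Finset.sum_mul]
      _ = μ * ∑ b, (v b : ℂ) * χ b := by
          rw [Finset.mul_sum]
          refine Finset.sum_congr rfl fun a _ => ?_
          have := congrArg (fun t : ℝ => (t : ℂ)) (hAv a)
          push_cast at this
          rw [this, mul_assoc]
  by_contra! hne
  have hzero : ∀ χ : AddChar G ℂ, ∑ b, (v b : ℂ) * χ b = 0 := fun χ => by
    by_contra h0
    exact hne χ (mul_right_cancel₀ h0 (key χ))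
  apply hv.2
  funext a
  -- Fourier inversion at `a`.
  have h1 : ∑ χ : AddChar G ℂ, (∑ b, (v b : ℂ) * χ b) * χ (-a) = Fintype.card G * v a := by
    calc _ = ∑ b, (v b : ℂ) * ∑ χ : AddChar G ℂ, χ (b - a) := by
          simp_rw [Finset.sum_mul, Finset.mul_sum]
          rw [Finset.sum_comm]
          refine Finset.sum_congr rfl fun b _ => Finset.sum_congr rfl fun χ _ => ?_
          rw [sub_eq_add_neg, AddChar.map_add_eq_mul, mul_assoc]
      _ = _ := by
          simp_rw [AddChar.sum_apply_eq_ite, sub_eq_zero]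
          simp [mul_comm]
  simp only [hzero, zero_mul, Finset.sum_const_zero] at h1
  have h2 := h1.symm
  rw [mul_eq_zero] at h2
  rcases h2 with h2 | h2
  · simp at h2
  · exact_mod_cast h2

/-- If `f` is even and the character sum `∑ f(x) χ(x)` is real, it is an eigenvalue of the Cayley
matrix `f (a - b)`; the real part of `χ` is an eigenvector. -/
theorem cayley_mem_spectrum {G : Type*} [AddCommGroup G] [Fintype G] [DecidableEq G] (f : G → ℝ)
    (hf : ∀ x, f (-x) = f x) (χ : AddChar G ℂ) {μ : ℝ}
    (hμ : ∑ x, (f x : ℂ) * χ x = μ) :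
    μ ∈ spectrum ℝ (Matrix.of fun a b => f (a - b)) := by
  rw [← Matrix.spectrum_toLin', ← Module.End.hasEigenvalue_iff_mem_spectrum]
  refine Module.End.hasEigenvalue_of_hasEigenvector (x := fun x => (χ x).re) ⟨?_, ?_⟩
  · rw [Module.End.mem_eigenspace_iff]
    funext a
    have h : ∑ b, (f (a - b) : ℂ) * χ b = μ * χ a := by
      rw [← hμ, Finset.sum_mul, ← Equiv.sum_comp (Equiv.addLeft a)]
      refine Finset.sum_congr rfl fun x _ => ?_
      rw [Equiv.coe_addLeft, AddChar.map_add_eq_mul, sub_add_cancel_left, hf]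
      ring
    have h' := congrArg Complex.re h
    simpa [Matrix.mulVec, dotProduct] using h'
  · intro h
    simpa using congrFun h 0

open scoped Classical in
/-- The character sum `∑ ψ(x)` over the nonzero squares `x` modulo `q`. -/
noncomputable def qrSum (q : ℕ) [NeZero q] (ψ : AddChar (ZMod q) ℂ) : ℂ :=
  ∑ x : ZMod q, (if x ∈ QRp q then 1 else 0) * ψ x

open scoped Classical in
/-- The indicator of the nonzero squares is `(1 + η - [x = 0]) / 2` with `η` the quadratic
character. -/
theorem two_mul_qrSum (q : ℕ) [Fact q.Prime] (ψ : AddChar (ZMod q) ℂ) :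
    2 * qrSum q ψ = ∑ x, ψ x +
      gaussSum ((quadraticChar (ZMod q)).ringHomComp (Int.castRingHom ℂ)) ψ - 1 := by
  have h1 : (1 : ℂ) = ∑ x : ZMod q, (if x = 0 then 1 else 0) * ψ x := by simp
  rw [h1, qrSum, gaussSum, Finset.mul_sum, ← Finset.sum_add_distrib, ← Finset.sum_sub_distrib]
  refine Finset.sum_congr rfl fun x _ => ?_
  by_cases h0 : x = 0
  · simp [h0, QRp]
  · by_cases hs : IsSquare x
    · have := (quadraticChar_one_iff_isSquare h0).2 hs
      simp [QRp, h0, hs, this]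
      ring
    · have := quadraticChar_neg_one_iff_not_isSquare.2 hs
      simp [QRp, h0, hs, this]

theorem quadraticChar_complex_ne_one (q : ℕ) [Fact q.Prime] (h4 : q % 4 = 1) :
    (quadraticChar (ZMod q)).ringHomComp (Int.castRingHom ℂ) ≠ 1 := by
  rw [MulChar.ringHomComp_ne_one_iff (by exact Int.cast_injective)]
  exact quadraticChar_ne_one (by rw [ZMod.ringChar_zmod_n]; omega)

theorem qrSum_one (q : ℕ) [Fact q.Prime] (h4 : q % 4 = 1) :
    qrSum q 1 = (((q : ℝ) - 1) / 2 : ℝ) := by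
  have h := two_mul_qrSum q 1
  rw [gaussSum_one_right (quadraticChar_complex_ne_one q h4)] at h
  simp at h
  push_cast
  linear_combination h / 2

theorem gaussSum_quadratic_eq (q : ℕ) [Fact q.Prime] (h4 : q % 4 = 1)
    {ψ : AddChar (ZMod q) ℂ} (hψ : ψ ≠ 1) :
    gaussSum ((quadraticChar (ZMod q)).ringHomComp (Int.castRingHom ℂ)) ψ = (√q : ℝ) ∨
    gaussSum ((quadraticChar (ZMod q)).ringHomComp (Int.castRingHom ℂ)) ψ = -(√q : ℝ) := by
  have h := gaussSum_sq (quadraticChar_complex_ne_one q h4)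
    ((quadraticChar_isQuadratic (ZMod q)).comp _) (AddChar.IsPrimitive.of_ne_one hψ)
  have hneg : quadraticChar (ZMod q) (-1) = 1 :=
    (quadraticChar_one_iff_isSquare (by simp)).2
      (ZMod.exists_sq_eq_neg_one_iff.2 (by omega))
  have hs : ((√q : ℝ) : ℂ) ^ 2 = q := by
    rw [← Complex.ofReal_pow, Real.sq_sqrt (Nat.cast_nonneg q)]
    simp
  apply sq_eq_sq_iff_eq_or_eq_neg.1
  rw [h, hs]
  simp [hneg]

theorem qrSum_of_ne_one (q : ℕ) [Fact q.Prime] (h4 : q % 4 = 1)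
    {ψ : AddChar (ZMod q) ℂ} (hψ : ψ ≠ 1) :
    qrSum q ψ = ((√q - 1) / 2 : ℝ) ∨ qrSum q ψ = ((-√q - 1) / 2 : ℝ) := by
  have h := two_mul_qrSum q ψ
  rw [AddChar.sum_eq_zero_of_ne_one hψ] at h
  push_cast
  rcases gaussSum_quadratic_eq q h4 hψ with hg | hg
  · left
    rw [hg] at h
    linear_combination h / 2
  · right
    rw [hg] at h
    linear_combination h / 2

/-- Twisting a nontrivial character by a nonresidue flips the sign of its Gauss sum, so both
signs occur. -/
theorem exists_qrSum_eq_neg (q : ℕ) [Fact q.Prime] (h4 : q % 4 = 1) :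
    ∃ ψ : AddChar (ZMod q) ℂ, qrSum q ψ = ((-√q - 1) / 2 : ℝ) := by
  have hne : (ZMod.stdAddChar (N := q)) ≠ 1 := by
    have := ZMod.isPrimitive_stdAddChar q (one_ne_zero)
    rwa [AddChar.mulShift_one] at this
  obtain ⟨a, ha⟩ := quadraticChar_exists_neg_one' (F := ZMod q)
    (by rw [ZMod.ringChar_zmod_n]; omega)
  have hne' : (ZMod.stdAddChar (N := q)).mulShift a ≠ 1 :=
    ZMod.isPrimitive_stdAddChar q a.ne_zero
  have hshift := gaussSum_mulShift
    ((quadraticChar (ZMod q)).ringHomComp (Int.castRingHom ℂ)) (ZMod.stdAddChar (N := q)) a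
  simp only [MulChar.ringHomComp_apply, ha] at hshift
  rcases gaussSum_quadratic_eq q h4 hne with hg | hg
  · refine ⟨(ZMod.stdAddChar (N := q)).mulShift a, ?_⟩
    have h := two_mul_qrSum q ((ZMod.stdAddChar (N := q)).mulShift a)
    rw [AddChar.sum_eq_zero_of_ne_one hne'] at h
    rw [hg] at hshift
    push_cast at hshift ⊢
    simp at hshift
    linear_combination h / 2 - hshift / 2
  · refine ⟨ZMod.stdAddChar (N := q), ?_⟩
    have h := two_mul_qrSum q (ZMod.stdAddChar (N := q))
    rw [AddChar.sum_eq_zero_of_ne_one hne, hg] at h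
    push_cast
    linear_combination h / 2

theorem addChar_pi_apply {ι : Type*} [Fintype ι] [DecidableEq ι] {M : ι → Type*}
    [∀ i, AddCommGroup (M i)] (χ : AddChar (∀ i, M i) ℂ) (y : ∀ i, M i) :
    χ y = ∏ i, χ.compAddMonoidHom (AddMonoidHom.single M i) (y i) := by
  have h := map_sum χ.toAddMonoidHom (fun i => Pi.single i (y i)) Finset.univ
  rw [Finset.univ_sum_single] at h
  simpa using congrArg Additive.toMul h

/-- The Chinese remainder isomorphism `e` carries the unit squares modulo `N` to the product of the
sets of nonzero squares modulo the primes `p i`. -/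
theorem mem_QRset_iff {n : ℕ} {p : Fin n → ℕ} (hp : ∀ i, (p i).Prime) {N : ℕ}
    (e : ZMod N ≃+* ∀ i, ZMod (p i)) (u : ZMod N) :
    u ∈ QRset N ↔ ∀ i, e u i ∈ QRp (p i) := by
  have : ∀ i, Fact (p i).Prime := fun i => ⟨hp i⟩
  constructor
  · rintro ⟨x, hx, rfl⟩ i
    have hi : IsUnit (e x i) := Pi.isUnit_iff.1 (hx.map e) i
    refine ⟨?_, e x i, ?_⟩
    · simpa using hi.ne_zero
    · simp [sq]
  · intro h
    choose h0 y hy using h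
    refine ⟨e.symm y, ?_, ?_⟩
    · refine IsUnit.map e.symm (Pi.isUnit_iff.2 fun i => isUnit_iff_ne_zero.2 ?_)
      intro hyi
      exact h0 i (by rw [hy, hyi, zero_mul])
    · apply e.injective
      funext i
      simp [hy i, sq]

/-- Since `-1` is a square modulo each `p i`, the set `QRset N` is symmetric, and the symmetrization
in the definition of `paleyType` changes nothing. -/
theorem paleyType_adj_iff {n : ℕ} (hn : 0 < n) {p : Fin n → ℕ} (hp : ∀ i, (p i).Prime)
    (h4 : ∀ i, p i % 4 = 1) {N : ℕ} (e : ZMod N ≃+* ∀ i, ZMod (p i)) :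
    (∀ u, u ∈ QRset N → -u ∈ QRset N) ∧
      ∀ a b, (paleyType N).Adj a b ↔ a - b ∈ QRset N := by
  have : ∀ i, Fact (p i).Prime := fun i => ⟨hp i⟩
  have hneg : ∀ u, u ∈ QRset N → -u ∈ QRset N := by
    intro u hu
    rw [mem_QRset_iff hp e] at hu ⊢
    intro i
    obtain ⟨h0, hs⟩ := hu i
    have h1 : IsSquare (-1 : ZMod (p i)) :=
      ZMod.exists_sq_eq_neg_one_iff.2 (by have := h4 i; omega)
    refine ⟨by simpa using h0, ?_⟩
    have := h1.mul hs
    simpa using this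
  refine ⟨hneg, fun a b => ?_⟩
  rw [paleyType, SimpleGraph.fromRel_adj]
  constructor
  · rintro ⟨-, h | h⟩
    · exact h
    · simpa using hneg _ h
  · intro h
    refine ⟨?_, Or.inl h⟩
    rintro rfl
    rw [sub_self, mem_QRset_iff hp e] at h
    exact (h ⟨0, hn⟩).1 (by simp)

open scoped Classical in
/-- The character sum over `QRset N` factors along the Chinese remainder isomorphism. -/
theorem sum_QRset_eq_prod {n : ℕ} {p : Fin n → ℕ} (hp : ∀ i, (p i).Prime)
    [∀ i, NeZero (p i)] {N : ℕ} [NeZero N]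
    (e : ZMod N ≃+* ∀ i, ZMod (p i)) (χ : AddChar (∀ i, ZMod (p i)) ℂ) :
    ∑ x : ZMod N, ((if x ∈ QRset N then 1 else 0 : ℝ) : ℂ) * χ (e x) =
      ∏ i, qrSum (p i) (χ.compAddMonoidHom (AddMonoidHom.single (fun i => ZMod (p i)) i)) := by
  unfold qrSum
  rw [Finset.prod_univ_sum, Fintype.piFinset_univ, ← Equiv.sum_comp e.toEquiv]
  refine Finset.sum_congr rfl fun x _ => ?_
  rw [Finset.prod_mul_distrib, RingEquiv.toEquiv_eq_coe, RingEquiv.coe_toEquiv,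
    ← addChar_pi_apply]
  congr 1
  rw [Finset.prod_ite_zero]
  simp only [mem_QRset_iff hp e, Finset.mem_univ, true_imp_iff, Finset.prod_const_one]
  split_ifs <;> simp

/-- Minimality: `s i` stands for `√(p i)` and `l i` for the `i`-th factor of an eigenvalue.  If
some factor `l j` is not the degree `(s j ^ 2 - 1) / 2`, then replacing the other factors by
degrees bounds the product by `(∏ i, (s i ^ 2 - 1) / 2) / (s j - 1)` in absolute value. -/
theorem prod_lower_bound {ι : Type*} [Fintype ι] [DecidableEq ι] (s l : ι → ℝ) (o : ι)
    (hs : ∀ i, 2 ≤ s i) (ho : ∀ i, s o ≤ s i)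
    (hl : ∀ i, l i = (s i ^ 2 - 1) / 2 ∨ l i = (s i - 1) / 2 ∨ l i = (-s i - 1) / 2) :
    (-s o - 1) / 2 * ∏ i ∈ Finset.univ.erase o, (s i ^ 2 - 1) / 2 ≤ ∏ i, l i := by
  have hK : ∀ i, 0 < (s i ^ 2 - 1) / 2 := fun i => by nlinarith [hs i]
  have hlK : ∀ i, |l i| ≤ (s i ^ 2 - 1) / 2 := fun i => by
    have := hs i
    rw [abs_le]
    rcases hl i with h | h | h <;> rw [h] <;> constructor <;> nlinarith
  have hP : 0 < ∏ i ∈ Finset.univ.erase o, (s i ^ 2 - 1) / 2 := Finset.prod_pos fun i _ => hK i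
  by_cases hall : ∀ i, l i = (s i ^ 2 - 1) / 2
  · have h1 : 0 < ∏ i, l i := Finset.prod_pos fun i _ => by rw [hall i]; exact hK i
    have h2 : (-s o - 1) / 2 < 0 := by linarith [hs o]
    exact (mul_neg_of_neg_of_pos h2 hP).le.trans h1.le
  · push Not at hall
    obtain ⟨j, hj⟩ := hall
    have hlj : |l j| ≤ (s j + 1) / 2 := by
      have := hs j
      rw [abs_le]
      rcases hl j with h | h | h
      · exact absurd h hj
      all_goals rw [h]; constructor <;> linarith
    have hT : (s o + 1) / 2 * ∏ i ∈ Finset.univ.erase o, (s i ^ 2 - 1) / 2 =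
        (∏ i, (s i ^ 2 - 1) / 2) / (s o - 1) := by
      rw [← Finset.mul_prod_erase _ _ (Finset.mem_univ o), eq_div_iff (by linarith [hs o])]
      ring
    have hTj : (s j + 1) / 2 * ∏ i ∈ Finset.univ.erase j, (s i ^ 2 - 1) / 2 =
        (∏ i, (s i ^ 2 - 1) / 2) / (s j - 1) := by
      rw [← Finset.mul_prod_erase _ _ (Finset.mem_univ j), eq_div_iff (by linarith [hs j])]
      ring
    have hb : |∏ i, l i| ≤ (s o + 1) / 2 * ∏ i ∈ Finset.univ.erase o, (s i ^ 2 - 1) / 2 := by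
      calc |∏ i, l i| = |l j| * ∏ i ∈ Finset.univ.erase j, |l i| := by
            rw [Finset.abs_prod, Finset.mul_prod_erase _ (fun i => |l i|) (Finset.mem_univ j)]
        _ ≤ (s j + 1) / 2 * ∏ i ∈ Finset.univ.erase j, (s i ^ 2 - 1) / 2 := by
            have : 0 ≤ (s j + 1) / 2 := by linarith [hs j]
            gcongr with i _
            exact hlK i
        _ = (∏ i, (s i ^ 2 - 1) / 2) / (s j - 1) := hTj
        _ ≤ (∏ i, (s i ^ 2 - 1) / 2) / (s o - 1) := by
            have h1 : 0 < s o - 1 := by linarith [hs o]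
            have h2 : 0 ≤ ∏ i, (s i ^ 2 - 1) / 2 := Finset.prod_nonneg fun i _ => (hK i).le
            gcongr
            exact ho j
        _ = _ := hT.symm
    have := (abs_le.1 hb).1
    linarith

theorem stmt_16 (n : ℕ) (hn : 0 < n) (p : Fin n → ℕ) (hp : ∀ i, (p i).Prime)
    (h4 : ∀ i, p i % 4 = 1) (hmono : StrictMono p)
    (N : ℕ) [NeZero N] (hN : N = ∏ i, p i) :
    IsLeast (spectrum ℝ (paleyAdjMatrix N))
      (((-Real.sqrt (p ⟨0, hn⟩)) - 1) *
        (∏ i ∈ Finset.univ.erase (⟨0, hn⟩ : Fin n), ((p i : ℝ) - 1)) / 2 ^ n) := by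
  classical
  have : ∀ i, Fact (p i).Prime := fun i => ⟨hp i⟩
  have hco : Pairwise (Function.onFun Nat.Coprime p) := fun i j hij =>
    (Nat.coprime_primes (hp i) (hp j)).2 (hmono.injective.ne hij)
  obtain ⟨e⟩ : Nonempty (ZMod N ≃+* ∀ i, ZMod (p i)) := by
    rw [hN]
    exact ⟨ZMod.prodEquivPi p hco⟩
  obtain ⟨hneg, hadj⟩ := paleyType_adj_iff hn hp h4 e
  obtain ⟨f, hf⟩ : ∃ f : ZMod N → ℝ, ∀ x, f x = if x ∈ QRset N then 1 else 0 := ⟨_, fun _ => rfl⟩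
  have hA : paleyAdjMatrix N = Matrix.of fun a b => f (a - b) := by
    ext a b
    simp only [paleyAdjMatrix, hadj, Matrix.of_apply, hf]
  have hsq : ∀ i, √(p i : ℝ) ^ 2 = p i := fun i => Real.sq_sqrt (Nat.cast_nonneg _)
  set o : Fin n := ⟨0, hn⟩ with ho
  have htarget : (-√(p o : ℝ) - 1) * (∏ i ∈ Finset.univ.erase o, ((p i : ℝ) - 1)) / 2 ^ n =
      (-√(p o : ℝ) - 1) / 2 * ∏ i ∈ Finset.univ.erase o, (√(p i : ℝ) ^ 2 - 1) / 2 := by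
    simp_rw [hsq]
    rw [Finset.prod_div_distrib, Finset.prod_const, Finset.card_erase_of_mem (Finset.mem_univ o),
      Finset.card_univ, Fintype.card_fin, div_mul_div_comm, ← pow_succ', Nat.sub_add_cancel hn]
  rw [htarget, hA]
  constructor
  · obtain ⟨ψ, hψ⟩ := exists_qrSum_eq_neg (p o) (h4 o)
    let χ : AddChar (∀ i, ZMod (p i)) ℂ := ψ.compAddMonoidHom (Pi.evalAddMonoidHom _ o)
    refine cayley_mem_spectrum f (fun x => ?_)
      (χ.compAddMonoidHom (e : ZMod N →+ ∀ i, ZMod (p i))) ?_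
    · have : -x ∈ QRset N ↔ x ∈ QRset N :=
        ⟨fun h => by simpa using hneg _ h, hneg x⟩
      simp only [hf, this]
    · have h := sum_QRset_eq_prod hp e χ
      simp_rw [← hf] at h
      refine h.trans ?_
      rw [← Finset.mul_prod_erase _ _ (Finset.mem_univ o)]
      push_cast
      congr 1
      · have : χ.compAddMonoidHom (AddMonoidHom.single (fun i => ZMod (p i)) o) = ψ := by
          ext x
          simp [χ]
        rw [this, hψ]
        push_cast
        rfl
      · refine Finset.prod_congr rfl fun i hi => ?_
        have hio : o ≠ i := (Finset.ne_of_mem_erase hi).symm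
        have : χ.compAddMonoidHom (AddMonoidHom.single (fun i => ZMod (p i)) i) = 1 := by
          ext x
          simp [χ, Pi.single_eq_of_ne hio]
        rw [this, qrSum_one (p i) (h4 i)]
        rw [← Complex.ofReal_pow, hsq]
        push_cast
        rfl
  · intro μ hμ
    obtain ⟨χ, hχ⟩ := mem_spectrum_cayley f hμ
    let χ' : AddChar (∀ i, ZMod (p i)) ℂ :=
      χ.compAddMonoidHom (e.symm : (∀ i, ZMod (p i)) →+ ZMod N)
    have hprod := sum_QRset_eq_prod hp e χ'
    have hχ' : ∀ x, χ' (e x) = χ x := fun x => by simp [χ']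
    simp_rw [hχ', ← hf] at hprod
    rw [hχ] at hprod
    have hl : ∀ i, ∃ l : ℝ,
        qrSum (p i) (χ'.compAddMonoidHom (AddMonoidHom.single (fun i => ZMod (p i)) i)) = l ∧
        (l = (√(p i : ℝ) ^ 2 - 1) / 2 ∨ l = (√(p i : ℝ) - 1) / 2 ∨
          l = (-√(p i : ℝ) - 1) / 2) := by
      intro i
      by_cases h1 : χ'.compAddMonoidHom (AddMonoidHom.single (fun i => ZMod (p i)) i) = 1
      · exact ⟨_, by rw [h1]; exact qrSum_one (p i) (h4 i), Or.inl (by rw [hsq])⟩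
      · rcases qrSum_of_ne_one (p i) (h4 i) h1 with h | h
        · exact ⟨_, h, Or.inr (Or.inl rfl)⟩
        · exact ⟨_, h, Or.inr (Or.inr rfl)⟩
    choose l hl1 hl2 using hl
    simp_rw [hl1] at hprod
    have hμl : μ = ∏ i, l i := by exact_mod_cast hprod
    rw [hμl]
    refine prod_lower_bound (fun i => √(p i : ℝ)) l o (fun i => ?_) (fun i => ?_) hl2
    · apply Real.le_sqrt_of_sq_le
      have h5 : 4 ≤ p i := by
        have := h4 i
        have := (hp i).one_lt
        omega
      have : (4 : ℝ) ≤ p i := by exact_mod_cast h5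
      linarith
    · apply Real.sqrt_le_sqrt
      exact_mod_cast hmono.monotone (Fin.mk_le_mk.2 (Nat.zero_le _) : o ≤ i)
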